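/- Let ũ be a minimizer of J over U = (𝓗₀¹(Ω) ∩ L^{2q}(Ω)) ∖ {0}, let λ = J(ũ), and suppose there exists Ṽ ∈ S_p such that a₁(ũ, v) + ∫_Ω Ṽ ũ v dxdy = λ ∫_Ω ũ v dxdy for all v ∈ H₀(Ω) (where H₀(Ω) is formed with the potential Ṽ). Then λ₁(Ṽ) = λ = J(ũ), where λ₁(Ṽ) = inf{ a₁(u,u) + ∫_Ω Ṽ u² dxdy : u ∈ H₀(Ω), ‖u‖_{L²(Ω)} = 1 }. -/

import Mathlib

open MeasureTheory Set Filter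

noncomputable section

/-- The open unit square `Ω = (0,1) × (0,1)` in `ℝ²`. -/
def Omega : Set (ℝ × ℝ) := Ioo (0:ℝ) 1 ×ˢ Ioo (0:ℝ) 1

/-- Test functions on a set `s`: smooth with compact support contained in `s`. -/
def IsTestOn (s : Set (ℝ × ℝ)) (φ : ℝ × ℝ → ℝ) : Prop :=
  ContDiff ℝ (⊤ : ℕ∞) φ ∧ HasCompactSupport φ ∧ tsupport φ ⊆ s

/-- Classical partial derivative in the `x`-direction. -/
def pdx (φ : ℝ × ℝ → ℝ) (p : ℝ × ℝ) : ℝ := fderiv ℝ φ p (1, 0)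

/-- Classical partial derivative in the `y`-direction. -/
def pdy (φ : ℝ × ℝ → ℝ) (p : ℝ × ℝ) : ℝ := fderiv ℝ φ p (0, 1)

/-- `g` is a weak `x`-partial derivative of `u` on `s`. -/
def HasWeakDerivXOn (s : Set (ℝ × ℝ)) (u g : ℝ × ℝ → ℝ) : Prop :=
  LocallyIntegrableOn u s volume ∧ LocallyIntegrableOn g s volume ∧
  ∀ φ : ℝ × ℝ → ℝ, IsTestOn s φ →
    ∫ p in s, u p * pdx φ p = - ∫ p in s, g p * φ p

/-- `g` is a weak `y`-partial derivative of `u` on `s`. -/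
def HasWeakDerivYOn (s : Set (ℝ × ℝ)) (u g : ℝ × ℝ → ℝ) : Prop :=
  LocallyIntegrableOn u s volume ∧ LocallyIntegrableOn g s volume ∧
  ∀ φ : ℝ × ℝ → ℝ, IsTestOn s φ →
    ∫ p in s, u p * pdy φ p = - ∫ p in s, g p * φ p

/-- Test functions on `Ω`. -/
def IsTest (φ : ℝ × ℝ → ℝ) : Prop := IsTestOn Omega φ

/-- Membership in the weighted Sobolev space `𝓗¹(Ω)`, with weak derivatives `gx, gy`:
`u ∈ L²(Ω)`, `gx = ∂ₓu`, `gy = ∂_y u` weakly, and `y^α₁ gx, x^α₂ gy ∈ L²(Ω)`. -/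
structure MemH1 (α₁ α₂ : ℝ) (u gx gy : ℝ × ℝ → ℝ) : Prop where
  memL2 : MemLp u 2 (volume.restrict Omega)
  weakX : HasWeakDerivXOn Omega u gx
  weakY : HasWeakDerivYOn Omega u gy
  wgx : MemLp (fun p => p.2 ^ α₁ * gx p) 2 (volume.restrict Omega)
  wgy : MemLp (fun p => p.1 ^ α₂ * gy p) 2 (volume.restrict Omega)

/-- The `𝓗¹(Ω)` norm of `u` (with weak derivatives `gx, gy`). -/
def H1Norm (α₁ α₂ : ℝ) (u gx gy : ℝ × ℝ → ℝ) : ℝ :=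
  Real.sqrt ((∫ p in Omega, (u p) ^ 2) +
    (∫ p in Omega, (p.2 ^ α₁ * gx p) ^ 2) +
    (∫ p in Omega, (p.1 ^ α₂ * gy p) ^ 2))

/-- Membership in `𝓗₀¹(Ω)`: member of `𝓗¹(Ω)` approximable in the `𝓗¹` norm by
test functions. -/
def MemH10 (α₁ α₂ : ℝ) (u gx gy : ℝ × ℝ → ℝ) : Prop :=
  MemH1 α₁ α₂ u gx gy ∧
  ∀ ε : ℝ, 0 < ε → ∃ φ : ℝ × ℝ → ℝ, IsTest φ ∧
    H1Norm α₁ α₂ (fun p => u p - φ p) (fun p => gx p - pdx φ p)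
      (fun p => gy p - pdy φ p) < ε

/-- Membership in `H₀(Ω) = {u ∈ 𝓗₀¹(Ω) : ∫_Ω V u² < ∞}`. -/
def MemH0 (α₁ α₂ : ℝ) (V u gx gy : ℝ × ℝ → ℝ) : Prop :=
  MemH10 α₁ α₂ u gx gy ∧
  IntegrableOn (fun p => V p * (u p) ^ 2) Omega volume

/-- The bilinear form `a(u,v)` associated with the sub-elliptic operator with potential `V`. -/
def aForm (α₁ α₂ : ℝ) (V u gx gy v hx hy : ℝ × ℝ → ℝ) : ℝ :=
  ∫ p in Omega, ((p.2 ^ α₁ * gx p) * (p.2 ^ α₁ * hx p) +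
    (p.1 ^ α₂ * gy p) * (p.1 ^ α₂ * hy p) + V p * u p * v p)

/-- The bilinear form `a₁(u,v)` (no potential). -/
def a1Form (α₁ α₂ : ℝ) (u gx gy v hx hy : ℝ × ℝ → ℝ) : ℝ :=
  ∫ p in Omega, ((p.2 ^ α₁ * gx p) * (p.2 ^ α₁ * hx p) +
    (p.1 ^ α₂ * gy p) * (p.1 ^ α₂ * hy p))

/-- Membership in `S_p = {V ∈ L^p(Ω) : V ≥ 0 a.e., ‖V‖_{L^p(Ω)} ≤ M}`. -/
def MemSp (ppow M : ℝ) (V : ℝ × ℝ → ℝ) : Prop :=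
  MemLp V (ENNReal.ofReal ppow) (volume.restrict Omega) ∧
  (∀ᵐ p ∂(volume.restrict Omega), 0 ≤ V p) ∧
  eLpNorm V (ENNReal.ofReal ppow) (volume.restrict Omega) ≤ ENNReal.ofReal M

/-- `u` (with weak derivatives `gx, gy`) is an eigenfunction of the sub-elliptic operator
with potential `V` for the eigenvalue `lam`. -/
def IsEigenfun (α₁ α₂ : ℝ) (V : ℝ × ℝ → ℝ) (lam : ℝ) (u gx gy : ℝ × ℝ → ℝ) : Prop :=
  MemH0 α₁ α₂ V u gx gy ∧
  ∀ v hx hy : ℝ × ℝ → ℝ, MemH0 α₁ α₂ V v hx hy →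
    aForm α₁ α₂ V u gx gy v hx hy = lam * ∫ p in Omega, u p * v p

/-- The first eigenvalue `λ₁(V) = inf { a(u,u) : u ∈ H₀(Ω), ‖u‖_{L²} = 1 }`. -/
def lam1 (α₁ α₂ : ℝ) (V : ℝ × ℝ → ℝ) : ℝ :=
  sInf { r | ∃ u gx gy : ℝ × ℝ → ℝ, MemH0 α₁ α₂ V u gx gy ∧
    (∫ p in Omega, (u p) ^ 2) = 1 ∧ r = aForm α₁ α₂ V u gx gy u gx gy }

/-- `sup { a(u,u) : u ∈ span(φ), ‖u‖_{L²(Ω)} = 1 }` for a finite family `φ` with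
weak derivatives `φx, φy`. -/
def rayleighSup (α₁ α₂ : ℝ) (V : ℝ × ℝ → ℝ) {k : ℕ} (φ φx φy : Fin k → ℝ × ℝ → ℝ) : ℝ :=
  sSup { s | ∃ c : Fin k → ℝ,
    (∫ p in Omega, (∑ i, c i * φ i p) ^ 2) = 1 ∧
    s = aForm α₁ α₂ V (fun p => ∑ i, c i * φ i p) (fun p => ∑ i, c i * φx i p)
      (fun p => ∑ i, c i * φy i p) (fun p => ∑ i, c i * φ i p)
      (fun p => ∑ i, c i * φx i p) (fun p => ∑ i, c i * φy i p) }

/-- The set of values `sup { a(u,u) : u ∈ E, ‖u‖ = 1 }` over `k`-dimensional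
subspaces `E` of `H₀(Ω)` (represented by `L²(Ω)`-linearly independent families of
`k` elements of `H₀(Ω)`). -/
def minmaxSet (α₁ α₂ : ℝ) (V : ℝ × ℝ → ℝ) (k : ℕ) : Set ℝ :=
  { r | ∃ φ φx φy : Fin k → ℝ × ℝ → ℝ,
      (∀ i, MemH0 α₁ α₂ V (φ i) (φx i) (φy i)) ∧
      (∀ c : Fin k → ℝ, (∀ᵐ p ∂(volume.restrict Omega), ∑ i, c i * φ i p = 0) → c = 0) ∧
      r = rayleighSup α₁ α₂ V φ φx φy }

/-- The `k`-th eigenvalue via the min-max principle. -/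
def lamk (α₁ α₂ : ℝ) (V : ℝ × ℝ → ℝ) (k : ℕ) : ℝ := sInf (minmaxSet α₁ α₂ V k)

/-- Membership in `U = (𝓗₀¹(Ω) ∩ L^{2q}(Ω)) \ {0}`. -/
def MemU (α₁ α₂ qe : ℝ) (u gx gy : ℝ × ℝ → ℝ) : Prop :=
  MemH10 α₁ α₂ u gx gy ∧
  MemLp u (ENNReal.ofReal (2 * qe)) (volume.restrict Omega) ∧
  ¬ (∀ᵐ p ∂(volume.restrict Omega), u p = 0)

/-- The functional `J(u) = (a₁(u,u) + M ‖u‖_{L^{2q}(Ω)}²) / ‖u‖_{L²(Ω)}²`. -/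
def Jfun (α₁ α₂ M qe : ℝ) (u gx gy : ℝ × ℝ → ℝ) : ℝ :=
  (a1Form α₁ α₂ u gx gy u gx gy +
    M * (∫ p in Omega, |u p| ^ (2 * qe)) ^ (1 / qe)) / (∫ p in Omega, (u p) ^ 2)

lemma aux_L1 {X : Type*} [MeasurableSpace X] {μ : Measure X} {A : X → ℝ} {An : ℕ → X → ℝ}
    {c : X → ℝ} {cn : ℕ → X → ℝ} {C : ℝ} (hA : MemLp A 2 μ) (hAn : ∀ n, MemLp (An n) 2 μ)
    (hcm : AEStronglyMeasurable c μ) (hcnm : ∀ n, AEStronglyMeasurable (cn n) μ)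
    (hc : ∀ x, |c x| ≤ C) (hcn : ∀ n x, |cn n x| ≤ C)
    (hlim : ∀ᵐ x ∂μ, Tendsto (fun n => cn n x) atTop (nhds (c x)))
    (hL : Tendsto (fun n => ∫ x, (A x - An n x) ^ 2 ∂μ) atTop (nhds 0)) :
    Tendsto (fun n => ∫ x, (c x * A x - cn n x * An n x) ^ 2 ∂μ) atTop (nhds 0) := by
  have hdiff : ∀ n, Integrable (fun x => (A x - An n x) ^ 2) μ := fun n =>
    (hA.sub (hAn n)).integrable_sq
  have hm2 : ∀ n, AEStronglyMeasurable (fun x => ((c x - cn n x) * A x) ^ 2) μ := fun n =>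
    ((hcm.sub (hcnm n)).mul hA.1).pow 2
  have hb : ∀ n x, ((c x - cn n x) * A x) ^ 2 ≤ 4 * C ^ 2 * (A x) ^ 2 := by
    intro n x
    have h1 : |c x - cn n x| ≤ 2 * C := by
      have := abs_sub (c x) (cn n x)
      linarith [hc x, hcn n x]
    have h2 : (c x - cn n x) ^ 2 ≤ (2 * C) ^ 2 := sq_le_sq' (by linarith [abs_le.1 h1]) (abs_le.1 h1).2
    nlinarith [sq_nonneg (A x)]
  have hint2 : ∀ n, Integrable (fun x => ((c x - cn n x) * A x) ^ 2) μ := fun n =>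
    (hA.integrable_sq.const_mul (4 * C ^ 2)).mono' (hm2 n)
      (Eventually.of_forall fun x => by
        rw [Real.norm_of_nonneg (sq_nonneg _)]; exact hb n x)
  have hT2 : Tendsto (fun n => ∫ x, ((c x - cn n x) * A x) ^ 2 ∂μ) atTop (nhds 0) := by
    have := tendsto_integral_of_dominated_convergence (μ := μ)
      (F := fun n x => ((c x - cn n x) * A x) ^ 2) (f := fun _ => (0:ℝ))
      (fun x => 4 * C ^ 2 * (A x) ^ 2) hm2 (hA.integrable_sq.const_mul (4 * C ^ 2))
      (fun n => Eventually.of_forall fun x => by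
        rw [Real.norm_of_nonneg (sq_nonneg _)]; exact hb n x)
      (by
        filter_upwards [hlim] with x hx
        have := (((tendsto_const_nhds (x := c x)).sub hx).mul_const (A x)).pow 2
        simpa using this)
    simpa using this
  have hT : Tendsto (fun n => 2 * C ^ 2 * ∫ x, (A x - An n x) ^ 2 ∂μ
      + 2 * ∫ x, ((c x - cn n x) * A x) ^ 2 ∂μ) atTop (nhds 0) := by
    simpa using (hL.const_mul (2 * C ^ 2)).add (hT2.const_mul 2)
  refine squeeze_zero (fun n => integral_nonneg fun x => sq_nonneg _) (fun n => ?_) hT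
  rw [← integral_const_mul, ← integral_const_mul,
    ← integral_add ((hdiff n).const_mul _) ((hint2 n).const_mul _)]
  refine integral_mono_of_nonneg (Eventually.of_forall fun x => sq_nonneg _)
    (((hdiff n).const_mul _).add ((hint2 n).const_mul _)) (Eventually.of_forall fun x => ?_)
  have h2 : (cn n x) ^ 2 ≤ C ^ 2 := sq_le_sq' (by linarith [abs_le.1 (hcn n x)]) (abs_le.1 (hcn n x)).2
  have h3 : (cn n x) ^ 2 * (A x - An n x) ^ 2 ≤ C ^ 2 * (A x - An n x) ^ 2 :=
    mul_le_mul_of_nonneg_right h2 (sq_nonneg _)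
  show (c x * A x - cn n x * An n x) ^ 2 ≤ 2 * C ^ 2 * (A x - An n x) ^ 2 + 2 * ((c x - cn n x) * A x) ^ 2
  nlinarith [sq_nonneg (cn n x * (A x - An n x) - (c x - cn n x) * A x)]

lemma aux_L2 {X : Type*} [MeasurableSpace X] {μ : Measure X} {A B : X → ℝ} {An Bn : ℕ → X → ℝ}
    (hA : MemLp A 2 μ) (hAn : ∀ n, MemLp (An n) 2 μ)
    (hB : MemLp B 2 μ) (hBn : ∀ n, MemLp (Bn n) 2 μ)
    (hL : Tendsto (fun n => ∫ x, (A x - An n x) ^ 2 ∂μ) atTop (nhds 0))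
    (hL' : Tendsto (fun n => ∫ x, (B x - Bn n x) ^ 2 ∂μ) atTop (nhds 0)) :
    Tendsto (fun n => ∫ x, ((A x + B x) - (An n x + Bn n x)) ^ 2 ∂μ) atTop (nhds 0) := by
  have h1 : ∀ n, Integrable (fun x => (A x - An n x) ^ 2) μ := fun n =>
    (hA.sub (hAn n)).integrable_sq
  have h2 : ∀ n, Integrable (fun x => (B x - Bn n x) ^ 2) μ := fun n =>
    (hB.sub (hBn n)).integrable_sq
  have hT : Tendsto (fun n => 2 * ∫ x, (A x - An n x) ^ 2 ∂μ
      + 2 * ∫ x, (B x - Bn n x) ^ 2 ∂μ) atTop (nhds 0) := by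
    simpa using (hL.const_mul 2).add (hL'.const_mul 2)
  refine squeeze_zero (fun n => integral_nonneg fun x => sq_nonneg _) (fun n => ?_) hT
  rw [← integral_const_mul, ← integral_const_mul,
    ← integral_add ((h1 n).const_mul _) ((h2 n).const_mul _)]
  refine integral_mono_of_nonneg (Eventually.of_forall fun x => sq_nonneg _)
    (((h1 n).const_mul _).add ((h2 n).const_mul _)) (Eventually.of_forall fun x => ?_)
  show ((A x + B x) - (An n x + Bn n x)) ^ 2 ≤ 2 * (A x - An n x) ^ 2 + 2 * (B x - Bn n x) ^ 2
  nlinarith [sq_nonneg ((A x - An n x) - (B x - Bn n x))]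

lemma aux_L3 {X : Type*} [MeasurableSpace X] {μ : Measure X} {A k : X → ℝ} {An : ℕ → X → ℝ}
    (hA : MemLp A 2 μ) (hAn : ∀ n, MemLp (An n) 2 μ) (hk : MemLp k 2 μ)
    (hL : Tendsto (fun n => ∫ x, (A x - An n x) ^ 2 ∂μ) atTop (nhds 0)) :
    Tendsto (fun n => ∫ x, An n x * k x ∂μ) atTop (nhds (∫ x, A x * k x ∂μ)) := by
  rw [tendsto_iff_norm_sub_tendsto_zero]
  have hT : Tendsto (fun n => (∫ x, (A x - An n x) ^ 2 ∂μ) ^ (1/2:ℝ) * (∫ x, (k x) ^ 2 ∂μ) ^ (1/2:ℝ))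
      atTop (nhds 0) := by
    have := (hL.rpow_const (p := (1/2:ℝ)) (Or.inr (by norm_num))).mul_const ((∫ x, (k x) ^ 2 ∂μ) ^ (1/2:ℝ))
    simpa using this
  refine squeeze_zero (fun n => norm_nonneg _) (fun n => ?_) hT
  have e : (∫ x, An n x * k x ∂μ) - (∫ x, A x * k x ∂μ) = -∫ x, (A x - An n x) * k x ∂μ := by
    have i1 : Integrable (fun x => An n x * k x) μ := (hAn n).integrable_mul hk
    have i2 : Integrable (fun x => A x * k x) μ := hA.integrable_mul hk
    rw [← integral_sub i1 i2, ← integral_neg]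
    congr 1; ext x; ring
  rw [e, norm_neg]
  refine (norm_integral_le_integral_norm _).trans ?_
  have := integral_mul_norm_le_Lp_mul_Lq (μ := μ) (p := 2) (q := 2) (f := fun x => A x - An n x) (g := k)
    (Real.HolderConjugate.two_two) (by simpa using! hA.sub (hAn n)) (by simpa using hk)
  simpa [norm_mul, Real.norm_eq_abs, sq_abs] using this

lemma aux_ae {X : Type*} [MeasurableSpace X] {μ : Measure X} {A : X → ℝ} {An : ℕ → X → ℝ}
    (hA : MemLp A 2 μ) (hAn : ∀ n, MemLp (An n) 2 μ)
    (hL : Tendsto (fun n => ∫ x, (A x - An n x) ^ 2 ∂μ) atTop (nhds 0)) :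
    ∃ ns : ℕ → ℕ, StrictMono ns ∧ ∀ᵐ x ∂μ, Tendsto (fun i => An (ns i) x) atTop (nhds (A x)) := by
  refine TendstoInMeasure.exists_seq_tendsto_ae (tendstoInMeasure_of_tendsto_eLpNorm (p := 2) (by norm_num)
    (fun n => (hAn n).1) hA.1 ?_)
  have e : ∀ n, eLpNorm (An n - A) 2 μ = ENNReal.ofReal ((∫ x, (A x - An n x) ^ 2 ∂μ) ^ (2⁻¹:ℝ)) := by
    intro n
    rw [MemLp.eLpNorm_eq_integral_rpow_norm (by norm_num) (by norm_num) ((hAn n).sub hA)]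
    congr 2
    simp only [ENNReal.toReal_ofNat, Real.rpow_ofNat, Pi.sub_apply, Real.norm_eq_abs, sq_abs]
    congr 1; ext x; ring
  simp_rw [e]
  have := (hL.rpow_const (p := (2⁻¹:ℝ)) (Or.inr (by norm_num)))
  have := ENNReal.tendsto_ofReal this
  simpa using this


lemma isOpen_Omega : IsOpen Omega := isOpen_Ioo.prod isOpen_Ioo

instance finOmega : IsFiniteMeasure ((volume : Measure (ℝ × ℝ)).restrict Omega) := by
  refine ⟨?_⟩
  rw [Measure.restrict_apply_univ]
  refine lt_of_le_of_lt (measure_mono (t := Icc (0:ℝ) 1 ×ˢ Icc (0:ℝ) 1) ?_)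
    (isCompact_Icc.prod isCompact_Icc).measure_lt_top
  exact prod_mono Ioo_subset_Icc_self Ioo_subset_Icc_self

lemma test_diff {φ : ℝ × ℝ → ℝ} (h : IsTest φ) : Differentiable ℝ φ :=
  h.1.differentiable (by simp)

lemma test_cont {φ : ℝ × ℝ → ℝ} (h : IsTest φ) : Continuous φ := h.1.continuous

lemma test_fderiv_cont {φ : ℝ × ℝ → ℝ} (h : ContDiff ℝ (⊤ : ℕ∞) φ) (e : ℝ × ℝ) :
    Continuous (fun p => fderiv ℝ φ p e) :=
  (h.continuous_fderiv (by simp)).clm_apply continuous_const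

lemma test_fderiv_supp {φ : ℝ × ℝ → ℝ} (h : IsTest φ) (e : ℝ × ℝ) :
    HasCompactSupport (fun p => fderiv ℝ φ p e) := h.2.1.fderiv_apply ℝ e

lemma test_zero {φ : ℝ × ℝ → ℝ} (h : IsTest φ) {p : ℝ × ℝ} (hp : p ∉ Omega) : φ p = 0 :=
  image_eq_zero_of_notMem_tsupport fun h' => hp (h.2.2 h')

lemma test_fderiv_zero {φ : ℝ × ℝ → ℝ} (h : IsTest φ) {p : ℝ × ℝ} (hp : p ∉ Omega) (e : ℝ × ℝ) :
    fderiv ℝ φ p e = 0 := by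
  have : p ∉ tsupport φ := fun h' => hp (h.2.2 h')
  rw [fderiv_of_notMem_tsupport (𝕜 := ℝ) this]; rfl

lemma test_ibp {φ η : ℝ × ℝ → ℝ} (h : IsTest φ) (h' : IsTest η) (e : ℝ × ℝ) :
    ∫ p in Omega, φ p * fderiv ℝ η p e = - ∫ p in Omega, fderiv ℝ φ p e * η p := by
  rw [setIntegral_eq_integral_of_forall_compl_eq_zero, setIntegral_eq_integral_of_forall_compl_eq_zero]
  · refine integral_mul_fderiv_eq_neg_fderiv_mul_of_integrable ?_ ?_ ?_ (fun x _ => test_diff h x)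
      (fun x _ => test_diff h' x)
    · exact ((test_fderiv_cont h.1 e).mul (test_cont h')).integrable_of_hasCompactSupport
        (h'.2.1.mul_left)
    · exact ((test_cont h).mul (test_fderiv_cont h'.1 e)).integrable_of_hasCompactSupport
        (h.2.1.mul_right)
    · exact ((test_cont h).mul (test_cont h')).integrable_of_hasCompactSupport
        (h.2.1.mul_right)
  · intro p hp; rw [test_zero h' hp, mul_zero]
  · intro p hp; rw [test_zero h hp, zero_mul]

lemma comp_test {F : ℝ × ℝ → ℝ} (hF : ContDiff ℝ (⊤ : ℕ∞) F) (h0 : F (0, 0) = 0)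
    {φ ψ : ℝ × ℝ → ℝ} (h : IsTest φ) (h' : IsTest ψ) : IsTest (fun p => F (φ p, ψ p)) := by
  have hsub : tsupport (fun p => F (φ p, ψ p)) ⊆ tsupport φ ∪ tsupport ψ := by
    refine closure_minimal ?_ ((isClosed_tsupport φ).union (isClosed_tsupport ψ))
    intro p hp
    by_contra hn
    simp only [mem_union, not_or] at hn
    apply hp
    simp only [image_eq_zero_of_notMem_tsupport hn.1, image_eq_zero_of_notMem_tsupport hn.2, h0]
  refine ⟨hF.comp (h.1.prodMk h'.1), ?_, hsub.trans (union_subset h.2.2 h'.2.2)⟩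
  exact (h.2.1.isCompact.union h'.2.1.isCompact).of_isClosed_subset (isClosed_tsupport _) hsub

lemma comp_fderiv {F : ℝ × ℝ → ℝ} (hF : ContDiff ℝ (⊤ : ℕ∞) F)
    {φ ψ : ℝ × ℝ → ℝ} (h : IsTest φ) (h' : IsTest ψ) (p e : ℝ × ℝ) :
    fderiv ℝ (fun p => F (φ p, ψ p)) p e =
      pdx F (φ p, ψ p) * fderiv ℝ φ p e + pdy F (φ p, ψ p) * fderiv ℝ ψ p e := by
  have h1 := ((hF.differentiable (by simp) (φ p, ψ p)).hasFDerivAt).comp p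
    ((test_diff h p).hasFDerivAt.prodMk (test_diff h' p).hasFDerivAt)
  have h2 : fderiv ℝ (fun p => F (φ p, ψ p)) p = _ := h1.fderiv
  rw [h2]
  simp only [ContinuousLinearMap.comp_apply, ContinuousLinearMap.prod_apply, pdx, pdy]
  have : ((fderiv ℝ φ p) e, (fderiv ℝ ψ p) e) =
    (fderiv ℝ φ p) e • ((1:ℝ), (0:ℝ)) + (fderiv ℝ ψ p) e • ((0:ℝ), (1:ℝ)) := by simp
  rw [this, map_add, map_smul, map_smul, smul_eq_mul, smul_eq_mul]; ring

lemma bdd_locInt {c g : ℝ × ℝ → ℝ} {C : ℝ} (hg : LocallyIntegrableOn g Omega volume)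
    (hc : AEStronglyMeasurable c (volume.restrict Omega)) (hb : ∀ p, |c p| ≤ C) :
    LocallyIntegrableOn (fun p => c p * g p) Omega volume := by
  intro x hx
  obtain ⟨s, hs, hgs⟩ := hg x hx
  refine ⟨s ∩ Omega, inter_mem hs self_mem_nhdsWithin, ?_⟩
  exact Integrable.bdd_mul (c := C) (hgs.mono_set inter_subset_left)
    (hc.mono_measure (Measure.restrict_mono inter_subset_right le_rfl)) (Eventually.of_forall hb)

lemma chain_dir (e : ℝ × ℝ) {ω : ℝ × ℝ → ℝ} (hω : Continuous ω) (hωpos : ∀ p ∈ Omega, 0 < ω p)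
    {F : ℝ × ℝ → ℝ} (hF : ContDiff ℝ (⊤ : ℕ∞) F) (h0 : F (0, 0) = 0) {C : ℝ}
    (hFx : ∀ p, |pdx F p| ≤ C) (hFy : ∀ p, |pdy F p| ≤ C)
    {u v g h : ℝ × ℝ → ℝ} {φ ψ : ℕ → ℝ × ℝ → ℝ}
    (hu : MemLp u 2 (volume.restrict Omega)) (hv : MemLp v 2 (volume.restrict Omega))
    (hφ : ∀ n, IsTest (φ n)) (hψ : ∀ n, IsTest (ψ n))
    (hφu : ∀ᵐ p ∂(volume.restrict Omega), Tendsto (fun n => φ n p) atTop (nhds (u p)))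
    (hψv : ∀ᵐ p ∂(volume.restrict Omega), Tendsto (fun n => ψ n p) atTop (nhds (v p)))
    (hg : LocallyIntegrableOn g Omega volume) (hh : LocallyIntegrableOn h Omega volume)
    (wg : MemLp (fun p => ω p * g p) 2 (volume.restrict Omega))
    (wh : MemLp (fun p => ω p * h p) 2 (volume.restrict Omega))
    (Lg : Tendsto (fun n => ∫ p in Omega, (ω p * (g p - fderiv ℝ (φ n) p e)) ^ 2) atTop (nhds 0))
    (Lh : Tendsto (fun n => ∫ p in Omega, (ω p * (h p - fderiv ℝ (ψ n) p e)) ^ 2) atTop (nhds 0))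
    (hwL : MemLp (fun p => F (u p, v p)) 2 (volume.restrict Omega))
    (hw : Tendsto (fun n => ∫ p in Omega, (F (u p, v p) - F (φ n p, ψ n p)) ^ 2) atTop (nhds 0)) :
    LocallyIntegrableOn (fun p => pdx F (u p, v p) * g p + pdy F (u p, v p) * h p) Omega volume ∧
    MemLp (fun p => ω p * (pdx F (u p, v p) * g p + pdy F (u p, v p) * h p)) 2
      (volume.restrict Omega) ∧
    Tendsto (fun n => ∫ p in Omega, (ω p * ((pdx F (u p, v p) * g p + pdy F (u p, v p) * h p)
      - fderiv ℝ (fun p => F (φ n p, ψ n p)) p e)) ^ 2) atTop (nhds 0) ∧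
    ∀ η, IsTest η → ∫ p in Omega, F (u p, v p) * fderiv ℝ η p e
      = - ∫ p in Omega, (pdx F (u p, v p) * g p + pdy F (u p, v p) * h p) * η p := by
  have cFx : Continuous (pdx F) := test_fderiv_cont hF _
  have cFy : Continuous (pdy F) := test_fderiv_cont hF _
  have hcm : AEStronglyMeasurable (fun p => pdx F (u p, v p)) (volume.restrict Omega) :=
    cFx.comp_aestronglyMeasurable (hu.1.prodMk hv.1)
  have hdm : AEStronglyMeasurable (fun p => pdy F (u p, v p)) (volume.restrict Omega) :=
    cFy.comp_aestronglyMeasurable (hu.1.prodMk hv.1)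
  have hcnm : ∀ n, Continuous (fun p => pdx F (φ n p, ψ n p)) := fun n =>
    cFx.comp ((test_cont (hφ n)).prodMk (test_cont (hψ n)))
  have hdnm : ∀ n, Continuous (fun p => pdy F (φ n p, ψ n p)) := fun n =>
    cFy.comp ((test_cont (hφ n)).prodMk (test_cont (hψ n)))
  have hclim : ∀ᵐ p ∂(volume.restrict Omega), Tendsto (fun n => pdx F (φ n p, ψ n p)) atTop
      (nhds (pdx F (u p, v p))) := by
    filter_upwards [hφu, hψv] with p h1 h2
    exact (cFx.tendsto _).comp (h1.prodMk_nhds h2)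
  have hdlim : ∀ᵐ p ∂(volume.restrict Omega), Tendsto (fun n => pdy F (φ n p, ψ n p)) atTop
      (nhds (pdy F (u p, v p))) := by
    filter_upwards [hφu, hψv] with p h1 h2
    exact (cFy.tendsto _).comp (h1.prodMk_nhds h2)
  have mtest : ∀ {φ : ℝ × ℝ → ℝ}, IsTest φ →
      MemLp (fun p => ω p * fderiv ℝ φ p e) 2 (volume.restrict Omega) := fun {φ} hh =>
    (hω.mul (test_fderiv_cont hh.1 e)).memLp_of_hasCompactSupport (test_fderiv_supp hh e).mul_left
  have mA : MemLp (fun p => pdx F (u p, v p) * (ω p * g p)) 2 (volume.restrict Omega) :=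
    MemLp.of_le_mul (c := C) wg (hcm.mul wg.1) (Eventually.of_forall fun p => by
      rw [norm_mul]; exact mul_le_mul_of_nonneg_right (hFx _) (norm_nonneg _))
  have mB : MemLp (fun p => pdy F (u p, v p) * (ω p * h p)) 2 (volume.restrict Omega) :=
    MemLp.of_le_mul (c := C) wh (hdm.mul wh.1) (Eventually.of_forall fun p => by
      rw [norm_mul]; exact mul_le_mul_of_nonneg_right (hFy _) (norm_nonneg _))
  have mAn : ∀ n, MemLp (fun p => pdx F (φ n p, ψ n p) * (ω p * fderiv ℝ (φ n) p e)) 2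
      (volume.restrict Omega) := fun n =>
    MemLp.of_le_mul (c := C) (mtest (hφ n)) ((hcnm n).aestronglyMeasurable.mul (mtest (hφ n)).1)
      (Eventually.of_forall fun p => by
      rw [norm_mul]; exact mul_le_mul_of_nonneg_right (hFx _) (norm_nonneg _))
  have mBn : ∀ n, MemLp (fun p => pdy F (φ n p, ψ n p) * (ω p * fderiv ℝ (ψ n) p e)) 2
      (volume.restrict Omega) := fun n =>
    MemLp.of_le_mul (c := C) (mtest (hψ n)) ((hdnm n).aestronglyMeasurable.mul (mtest (hψ n)).1)
      (Eventually.of_forall fun p => by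
      rw [norm_mul]; exact mul_le_mul_of_nonneg_right (hFy _) (norm_nonneg _))
  have T1 := aux_L1 (C := C) wg (fun n => mtest (hφ n)) hcm (fun n => (hcnm n).aestronglyMeasurable)
    (fun p => hFx _) (fun n p => hFx _) hclim (by simpa only [mul_sub] using Lg)
  have T2 := aux_L1 (C := C) wh (fun n => mtest (hψ n)) hdm (fun n => (hdnm n).aestronglyMeasurable)
    (fun p => hFy _) (fun n p => hFy _) hdlim (by simpa only [mul_sub] using Lh)
  have T3 := aux_L2 mA mAn mB mBn T1 T2
  have mG : MemLp (fun p => ω p * (pdx F (u p, v p) * g p + pdy F (u p, v p) * h p)) 2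
      (volume.restrict Omega) := by
    convert mA.add mB using 1
    ext p; simp only [Pi.add_apply]; ring
  have hL : Tendsto (fun n => ∫ p in Omega, (ω p * ((pdx F (u p, v p) * g p + pdy F (u p, v p) * h p)
      - fderiv ℝ (fun p => F (φ n p, ψ n p)) p e)) ^ 2) atTop (nhds 0) := by
    refine T3.congr fun n => ?_
    congr 1; ext p
    rw [comp_fderiv hF (hφ n) (hψ n)]; ring
  have tn := fun n => comp_test hF h0 (hφ n) (hψ n)
  refine ⟨(bdd_locInt hg hcm fun p => hFx _).add (bdd_locInt hh hdm fun p => hFy _), mG, hL, ?_⟩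
  intro η hη
  have mwn : ∀ n, MemLp (fun p => F (φ n p, ψ n p)) 2 (volume.restrict Omega) := fun n =>
    (test_cont (tn n)).memLp_of_hasCompactSupport (tn n).2.1
  have mk1 : MemLp (fun p => fderiv ℝ η p e) 2 (volume.restrict Omega) :=
    (test_fderiv_cont hη.1 e).memLp_of_hasCompactSupport (test_fderiv_supp hη e)
  have mk2 : MemLp (fun p => (ω p)⁻¹ * η p) 2 (volume.restrict Omega) := by
    refine Continuous.memLp_of_hasCompactSupport ?_ hη.2.1.mul_left
    refine continuous_of_tsupport fun p hp => ?_
    have hp' : p ∈ Omega := hη.2.2 (closure_mono (Function.support_mul_subset_right _ _) hp)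
    exact (hω.continuousAt.inv₀ (hωpos p hp').ne').mul (test_cont hη).continuousAt
  have S1 := aux_L3 hwL mwn mk1 hw
  have S2 := aux_L3 mG (fun n => mtest (tn n)) mk2 (by simpa only [mul_sub] using hL)
  have key : ∀ f : ℝ × ℝ → ℝ, ∫ p in Omega, ω p * f p * ((ω p)⁻¹ * η p) = ∫ p in Omega, f p * η p := by
    intro f
    refine setIntegral_congr_fun isOpen_Omega.measurableSet fun p hp => ?_
    have := (hωpos p hp).ne'
    field_simp
  simp only [key] at S2
  refine tendsto_nhds_unique S1 (S2.neg.congr fun n => ?_)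
  rw [test_ibp (tn n) hη]


lemma h10_seq {α₁ α₂ : ℝ} {u gx gy : ℝ × ℝ → ℝ} (h : MemH10 α₁ α₂ u gx gy) :
    ∃ φ : ℕ → ℝ × ℝ → ℝ, (∀ n, IsTest (φ n)) ∧
      (∀ᵐ p ∂(volume.restrict Omega), Tendsto (fun n => φ n p) atTop (nhds (u p))) ∧
      Tendsto (fun n => ∫ p in Omega, (u p - φ n p) ^ 2) atTop (nhds 0) ∧
      Tendsto (fun n => ∫ p in Omega, (p.2 ^ α₁ * (gx p - fderiv ℝ (φ n) p (1, 0))) ^ 2) atTop (nhds 0) ∧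
      Tendsto (fun n => ∫ p in Omega, (p.1 ^ α₂ * (gy p - fderiv ℝ (φ n) p (0, 1))) ^ 2) atTop (nhds 0) := by
  choose φ hφ hlt using fun n : ℕ => h.2 (1 / ((n : ℝ) + 1)) (by positivity)
  have hlim : Tendsto (fun n : ℕ => (1 / ((n : ℝ) + 1)) ^ 2) atTop (nhds 0) := by
    simpa using (tendsto_one_div_add_atTop_nhds_zero_nat (𝕜 := ℝ)).pow 2
  have n1 : ∀ n, 0 ≤ ∫ p in Omega, (u p - φ n p) ^ 2 := fun n => integral_nonneg fun _ => sq_nonneg _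
  have n2 : ∀ n, 0 ≤ ∫ p in Omega, (p.2 ^ α₁ * (gx p - fderiv ℝ (φ n) p (1, 0))) ^ 2 :=
    fun n => integral_nonneg fun _ => sq_nonneg _
  have n3 : ∀ n, 0 ≤ ∫ p in Omega, (p.1 ^ α₂ * (gy p - fderiv ℝ (φ n) p (0, 1))) ^ 2 :=
    fun n => integral_nonneg fun _ => sq_nonneg _
  have hs : ∀ n, (∫ p in Omega, (u p - φ n p) ^ 2) +
      (∫ p in Omega, (p.2 ^ α₁ * (gx p - fderiv ℝ (φ n) p (1, 0))) ^ 2) +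
      (∫ p in Omega, (p.1 ^ α₂ * (gy p - fderiv ℝ (φ n) p (0, 1))) ^ 2) ≤ (1 / ((n : ℝ) + 1)) ^ 2 := by
    intro n
    have := hlt n
    simp only [H1Norm, pdx, pdy] at this
    exact ((Real.sqrt_lt' (by positivity)).1 this).le
  have T1 := squeeze_zero n1 (fun n => by linarith [hs n, n1 n, n2 n, n3 n]) hlim
  have T2 := squeeze_zero n2 (fun n => by linarith [hs n, n1 n, n2 n, n3 n]) hlim
  have T3 := squeeze_zero n3 (fun n => by linarith [hs n, n1 n, n2 n, n3 n]) hlim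
  obtain ⟨ns, hns, hae⟩ := aux_ae h.1.memL2
    (fun n => (test_cont (hφ n)).memLp_of_hasCompactSupport (hφ n).2.1) T1
  exact ⟨fun n => φ (ns n), fun n => hφ _, hae, T1.comp hns.tendsto_atTop, T2.comp hns.tendsto_atTop,
    T3.comp hns.tendsto_atTop⟩

lemma lip_of_pd {F : ℝ × ℝ → ℝ} (hF : ContDiff ℝ (⊤ : ℕ∞) F) {C : ℝ}
    (hFx : ∀ p, |pdx F p| ≤ C) (hFy : ∀ p, |pdy F p| ≤ C) (x y : ℝ × ℝ) :
    (F x - F y) ^ 2 ≤ (2 * C) ^ 2 * ((x.1 - y.1) ^ 2 + (x.2 - y.2) ^ 2) := by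
  have hC : 0 ≤ C := (abs_nonneg _).trans (hFx 0)
  have hb : ∀ p, ‖fderiv ℝ F p‖ ≤ 2 * C := by
    intro p
    refine ContinuousLinearMap.opNorm_le_bound _ (by positivity) fun z => ?_
    have e : z = z.1 • ((1:ℝ), (0:ℝ)) + z.2 • ((0:ℝ), (1:ℝ)) := by ext <;> simp
    have e2 : fderiv ℝ F p z = z.1 * pdx F p + z.2 * pdy F p := by
      conv_lhs => rw [e]
      rw [map_add, map_smul, map_smul]; rfl
    rw [e2]
    calc ‖z.1 * pdx F p + z.2 * pdy F p‖ ≤ ‖z.1‖ * ‖pdx F p‖ + ‖z.2‖ * ‖pdy F p‖ := by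
          rw [← norm_mul, ← norm_mul]; exact norm_add_le _ _
      _ ≤ ‖z‖ * C + ‖z‖ * C := by
          gcongr
          · exact norm_fst_le z
          · exact hFx p
          · exact norm_snd_le z
          · exact hFy p
      _ = 2 * C * ‖z‖ := by ring
  have h1 := Convex.norm_image_sub_le_of_norm_fderiv_le (𝕜 := ℝ) (s := univ) (x := y) (y := x)
    (fun p _ => hF.differentiable (by simp) p) (fun p _ => hb p) convex_univ (mem_univ _) (mem_univ _)
  have h2 : ‖x - y‖ ^ 2 ≤ (x.1 - y.1) ^ 2 + (x.2 - y.2) ^ 2 := by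
    rw [Prod.norm_def]
    rcases max_choice ‖(x - y).1‖ ‖(x - y).2‖ with h | h <;> rw [h] <;>
      simp only [Prod.fst_sub, Prod.snd_sub, Real.norm_eq_abs, sq_abs] <;>
      nlinarith [sq_nonneg (x.1 - y.1), sq_nonneg (x.2 - y.2)]
  calc (F x - F y) ^ 2 = ‖F x - F y‖ ^ 2 := by rw [Real.norm_eq_abs, sq_abs]
    _ ≤ (2 * C * ‖x - y‖) ^ 2 := by gcongr
    _ = (2 * C) ^ 2 * ‖x - y‖ ^ 2 := by ring
    _ ≤ _ := by gcongr

lemma chain_H10 {α₁ α₂ : ℝ} (hα₁ : 0 < α₁) (hα₂ : 0 < α₂) {u gx gy v hx hy : ℝ × ℝ → ℝ}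
    (hu : MemH10 α₁ α₂ u gx gy) (hv : MemH10 α₁ α₂ v hx hy)
    {F : ℝ × ℝ → ℝ} (hF : ContDiff ℝ (⊤ : ℕ∞) F) (h0 : F (0, 0) = 0) {C : ℝ}
    (hFx : ∀ p, |pdx F p| ≤ C) (hFy : ∀ p, |pdy F p| ≤ C) :
    MemH10 α₁ α₂ (fun p => F (u p, v p))
      (fun p => pdx F (u p, v p) * gx p + pdy F (u p, v p) * hx p)
      (fun p => pdx F (u p, v p) * gy p + pdy F (u p, v p) * hy p) := by
  obtain ⟨φ, hφ, φae, φ1, φ2, φ3⟩ := h10_seq hu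
  obtain ⟨ψ, hψ, ψae, ψ1, ψ2, ψ3⟩ := h10_seq hv
  have lip := lip_of_pd hF hFx hFy
  have mu := hu.1.memL2
  have mv := hv.1.memL2
  have hwm : AEStronglyMeasurable (fun p => F (u p, v p)) (volume.restrict Omega) :=
    hF.continuous.comp_aestronglyMeasurable (mu.1.prodMk mv.1)
  have hwL : MemLp (fun p => F (u p, v p)) 2 (volume.restrict Omega) := by
    rw [memLp_two_iff_integrable_sq hwm]
    refine ((mu.integrable_sq.add mv.integrable_sq).const_mul ((2 * C) ^ 2)).mono' (hwm.pow 2)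
      (Eventually.of_forall fun p => ?_)
    rw [Real.norm_of_nonneg (sq_nonneg _)]
    simpa [h0] using lip (u p, v p) (0, 0)
  have hw : Tendsto (fun n => ∫ p in Omega, (F (u p, v p) - F (φ n p, ψ n p)) ^ 2) atTop (nhds 0) := by
    have hT : Tendsto (fun n => (2 * C) ^ 2 * ((∫ p in Omega, (u p - φ n p) ^ 2)
        + ∫ p in Omega, (v p - ψ n p) ^ 2)) atTop (nhds 0) := by
      simpa using (φ1.add ψ1).const_mul ((2 * C) ^ 2)
    refine squeeze_zero (fun n => integral_nonneg fun x => sq_nonneg _) (fun n => ?_) hT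
    have i1 : Integrable (fun p => (u p - φ n p) ^ 2) (volume.restrict Omega) :=
      (mu.sub ((test_cont (hφ n)).memLp_of_hasCompactSupport (hφ n).2.1)).integrable_sq
    have i2 : Integrable (fun p => (v p - ψ n p) ^ 2) (volume.restrict Omega) :=
      (mv.sub ((test_cont (hψ n)).memLp_of_hasCompactSupport (hψ n).2.1)).integrable_sq
    rw [← integral_add i1 i2, ← integral_const_mul]
    exact integral_mono_of_nonneg (Eventually.of_forall fun x => sq_nonneg _)
      ((i1.add i2).const_mul _) (Eventually.of_forall fun p => lip _ _)
  obtain ⟨x1, x2, x3, x4⟩ := chain_dir (1, 0) (ω := fun p => p.2 ^ α₁)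
    (continuous_snd.rpow_const fun _ => Or.inr hα₁.le) (fun p hp => Real.rpow_pos_of_pos hp.2.1 _)
    hF h0 hFx hFy mu mv hφ hψ φae ψae hu.1.weakX.2.1 hv.1.weakX.2.1 hu.1.wgx hv.1.wgx φ2 ψ2 hwL hw
  obtain ⟨y1, y2, y3, y4⟩ := chain_dir (0, 1) (ω := fun p => p.1 ^ α₂)
    (continuous_fst.rpow_const fun _ => Or.inr hα₂.le) (fun p hp => Real.rpow_pos_of_pos hp.1.1 _)
    hF h0 hFx hFy mu mv hφ hψ φae ψae hu.1.weakY.2.1 hv.1.weakY.2.1 hu.1.wgy hv.1.wgy φ3 ψ3 hwL hw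
  have hloc : LocallyIntegrableOn (fun p => F (u p, v p)) Omega volume :=
    IntegrableOn.locallyIntegrableOn (hwL.integrable (by norm_num))
  refine ⟨⟨hwL, ⟨hloc, x1, x4⟩, ⟨hloc, y1, y4⟩, x2, y2⟩, fun ε hε => ?_⟩
  have hsum := (hw.add x3).add y3
  simp only [add_zero] at hsum
  obtain ⟨n, hn⟩ := (hsum.eventually_lt_const (u := ε ^ 2) (by positivity)).exists
  refine ⟨_, comp_test hF h0 (hφ n) (hψ n), ?_⟩
  rw [H1Norm, Real.sqrt_lt' hε]
  exact hn


def auxRho (t ε : ℝ) (z : ℝ × ℝ) : ℝ := (1 - t) * z.1 ^ 2 + t * (z.2 ^ 2 / (1 + ε * z.2 ^ 2))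

def auxF (t ε δ : ℝ) (z : ℝ × ℝ) : ℝ := Real.sqrt (auxRho t ε z + δ ^ 2) - δ

lemma auxRho_nonneg {t ε : ℝ} (ht : t ∈ Ioo (0:ℝ) 1) (hε : 0 < ε) (z : ℝ × ℝ) : 0 ≤ auxRho t ε z := by
  have h1 : 0 ≤ 1 - t := by linarith [ht.2]
  have h2 : 0 ≤ t := ht.1.le
  unfold auxRho; positivity

lemma auxRho_contDiff {t ε : ℝ} (hε : 0 < ε) : ContDiff ℝ (⊤ : ℕ∞) (auxRho t ε) := by
  unfold auxRho
  refine ContDiff.add (contDiff_const.mul (contDiff_fst.pow 2)) (contDiff_const.mul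
    (ContDiff.div (contDiff_snd.pow 2) (contDiff_const.add (contDiff_const.mul (contDiff_snd.pow 2))) ?_))
  intro z; positivity

lemma auxF_contDiff {t ε δ : ℝ} (ht : t ∈ Ioo (0:ℝ) 1) (hε : 0 < ε) (hδ : 0 < δ) :
    ContDiff ℝ (⊤ : ℕ∞) (auxF t ε δ) := by
  unfold auxF
  refine ContDiff.sub (ContDiff.sqrt ((auxRho_contDiff hε).add contDiff_const) ?_) contDiff_const
  intro z
  have := auxRho_nonneg ht hε z
  positivity

lemma auxF_zero {t ε δ : ℝ} (hδ : 0 < δ) : auxF t ε δ (0, 0) = 0 := by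
  simp [auxF, auxRho, Real.sqrt_sq hδ.le]

lemma pdx_eq {F : ℝ × ℝ → ℝ} (hF : ContDiff ℝ (⊤ : ℕ∞) F) (z : ℝ × ℝ) {d : ℝ}
    (h : HasDerivAt (fun s => F (s, z.2)) d z.1) : pdx F z = d := by
  have h1 := ((hF.differentiable (by simp) z).hasFDerivAt).comp_hasDerivAt z.1
    ((hasDerivAt_id z.1).prodMk (hasDerivAt_const z.1 z.2))
  exact h1.unique h

lemma pdy_eq {F : ℝ × ℝ → ℝ} (hF : ContDiff ℝ (⊤ : ℕ∞) F) (z : ℝ × ℝ) {d : ℝ}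
    (h : HasDerivAt (fun s => F (z.1, s)) d z.2) : pdy F z = d := by
  have h1 := ((hF.differentiable (by simp) z).hasFDerivAt).comp_hasDerivAt z.2
    ((hasDerivAt_const z.2 z.1).prodMk (hasDerivAt_id z.2))
  exact h1.unique h

lemma auxF_pdx {t ε δ : ℝ} (ht : t ∈ Ioo (0:ℝ) 1) (hε : 0 < ε) (hδ : 0 < δ) (z : ℝ × ℝ) :
    pdx (auxF t ε δ) z = (1 - t) * z.1 / Real.sqrt (auxRho t ε z + δ ^ 2) := by
  apply pdx_eq (auxF_contDiff ht hε hδ)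
  have hpos : 0 < auxRho t ε z + δ ^ 2 := by have := auxRho_nonneg ht hε z; positivity
  have h1 : HasDerivAt (fun s => auxRho t ε (s, z.2) + δ ^ 2) ((1 - t) * (2 * z.1)) z.1 := by
    unfold auxRho
    have := ((((hasDerivAt_id z.1).pow 2).const_mul (1 - t)).add_const
      (t * (z.2 ^ 2 / (1 + ε * z.2 ^ 2)))).add_const (δ ^ 2)
    simpa using this
  have h2 := (h1.sqrt hpos.ne').sub_const δ
  refine h2.congr_deriv ?_
  have hs := (Real.sqrt_pos.2 hpos).ne'
  change _ / (2 * Real.sqrt (auxRho t ε z + δ ^ 2)) = _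
  field_simp

lemma auxF_pdy {t ε δ : ℝ} (ht : t ∈ Ioo (0:ℝ) 1) (hε : 0 < ε) (hδ : 0 < δ) (z : ℝ × ℝ) :
    pdy (auxF t ε δ) z = t * (z.2 / (1 + ε * z.2 ^ 2) ^ 2) / Real.sqrt (auxRho t ε z + δ ^ 2) := by
  apply pdy_eq (auxF_contDiff ht hε hδ)
  have hpos : 0 < auxRho t ε z + δ ^ 2 := by have := auxRho_nonneg ht hε z; positivity
  have hD : (1 + ε * z.2 ^ 2) ≠ 0 := by positivity
  have h1 : HasDerivAt (fun s => auxRho t ε (z.1, s) + δ ^ 2)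
      (t * (2 * z.2 / (1 + ε * z.2 ^ 2) ^ 2)) z.2 := by
    unfold auxRho
    have a1 : HasDerivAt (fun s : ℝ => s ^ 2) (2 * z.2) z.2 := by
      simpa using hasDerivAt_pow 2 z.2
    have a2 := a1.div ((a1.const_mul ε).const_add 1) hD
    have := ((a2.const_mul t).const_add ((1 - t) * z.1 ^ 2)).add_const (δ ^ 2)
    refine this.congr_deriv ?_
    field_simp; ring
  have h2 := (h1.sqrt hpos.ne').sub_const δ
  refine h2.congr_deriv ?_
  have hs := (Real.sqrt_pos.2 hpos).ne'
  change _ / (2 * Real.sqrt (auxRho t ε z + δ ^ 2)) = _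
  field_simp

lemma auxF_grad {t ε δ : ℝ} (ht : t ∈ Ioo (0:ℝ) 1) (hε : 0 < ε) (hδ : 0 < δ) (z : ℝ × ℝ) (a b : ℝ) :
    (pdx (auxF t ε δ) z * a + pdy (auxF t ε δ) z * b) ^ 2 ≤ (1 - t) * a ^ 2 + t * b ^ 2 := by
  rw [auxF_pdx ht hε hδ, auxF_pdy ht hε hδ]
  have hr := auxRho_nonneg ht hε z
  have hpos : 0 < auxRho t ε z + δ ^ 2 := by positivity
  have e : ((1 - t) * z.1 / Real.sqrt (auxRho t ε z + δ ^ 2) * a +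
      t * (z.2 / (1 + ε * z.2 ^ 2) ^ 2) / Real.sqrt (auxRho t ε z + δ ^ 2) * b) ^ 2 =
      ((1 - t) * z.1 * a + t * (z.2 / (1 + ε * z.2 ^ 2) ^ 2) * b) ^ 2 / (auxRho t ε z + δ ^ 2) := by
    conv_rhs => rw [← Real.sq_sqrt hpos.le]
    have := (Real.sqrt_pos.2 hpos).ne'
    field_simp
  rw [e, div_le_iff₀ hpos]
  have h1t : 0 ≤ 1 - t := by linarith [ht.2]
  have h0t : 0 ≤ t := ht.1.le
  set k := 1 / (1 + ε * z.2 ^ 2) with hk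
  have hk0 : 0 ≤ k := by positivity
  have hk1 : k ≤ 1 := by
    rw [hk, div_le_one (by positivity)]; nlinarith [mul_nonneg hε.le (sq_nonneg z.2)]
  have e1 : z.2 / (1 + ε * z.2 ^ 2) ^ 2 = z.2 * k ^ 2 := by rw [hk]; field_simp
  have e2 : auxRho t ε z = (1 - t) * z.1 ^ 2 + t * (z.2 ^ 2 * k) := by rw [auxRho, hk]; ring
  rw [e1, e2]
  have s1 : ((1 - t) * z.1 * a + t * (z.2 * k ^ 2) * b) ^ 2 ≤
      ((1 - t) * z.1 ^ 2 + t * (z.2 ^ 2 * k)) * ((1 - t) * a ^ 2 + t * (k ^ 3 * b ^ 2)) := by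
    have : 0 ≤ (1 - t) * t * k * (z.1 * k * b - z.2 * a) ^ 2 := by positivity
    nlinarith
  have hk3 : k ^ 3 ≤ 1 := pow_le_one₀ hk0 hk1
  have s2 : (1 - t) * a ^ 2 + t * (k ^ 3 * b ^ 2) ≤ (1 - t) * a ^ 2 + t * b ^ 2 := by
    have : k ^ 3 * b ^ 2 ≤ 1 * b ^ 2 := mul_le_mul_of_nonneg_right hk3 (sq_nonneg b)
    nlinarith
  have hP : 0 ≤ (1 - t) * z.1 ^ 2 + t * (z.2 ^ 2 * k) := by positivity
  have hQ : 0 ≤ (1 - t) * a ^ 2 + t * b ^ 2 := by positivity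
  nlinarith [mul_le_mul_of_nonneg_left s2 hP, mul_nonneg hQ (sq_nonneg δ)]

lemma auxF_bx {t ε δ : ℝ} (ht : t ∈ Ioo (0:ℝ) 1) (hε : 0 < ε) (hδ : 0 < δ) (z : ℝ × ℝ) :
    |pdx (auxF t ε δ) z| ≤ 1 := by
  have := auxF_grad ht hε hδ z 1 0
  rw [← sq_le_one_iff_abs_le_one]
  linarith [ht.1]

lemma auxF_by {t ε δ : ℝ} (ht : t ∈ Ioo (0:ℝ) 1) (hε : 0 < ε) (hδ : 0 < δ) (z : ℝ × ℝ) :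
    |pdy (auxF t ε δ) z| ≤ 1 := by
  have := auxF_grad ht hε hδ z 0 1
  rw [← sq_le_one_iff_abs_le_one]
  linarith [ht.2]

lemma auxF_nonneg {t ε δ : ℝ} (ht : t ∈ Ioo (0:ℝ) 1) (hε : 0 < ε) (hδ : 0 < δ) (z : ℝ × ℝ) :
    0 ≤ auxF t ε δ z := by
  have := auxRho_nonneg ht hε z
  exact sub_nonneg.2 (Real.le_sqrt_of_sq_le (by linarith))

lemma auxF_sq_le {t ε δ : ℝ} (ht : t ∈ Ioo (0:ℝ) 1) (hε : 0 < ε) (hδ : 0 < δ) (z : ℝ × ℝ) :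
    auxF t ε δ z ^ 2 ≤ auxRho t ε z := by
  have h0 := auxF_nonneg ht hε hδ z
  have hr := auxRho_nonneg ht hε z
  have h1 := Real.sq_sqrt (show 0 ≤ auxRho t ε z + δ ^ 2 by positivity)
  unfold auxF at *
  nlinarith

lemma auxF_eq_zero {t ε δ : ℝ} (ht : t ∈ Ioo (0:ℝ) 1) (hε : 0 < ε) (hδ : 0 < δ) (z : ℝ × ℝ)
    (h : auxF t ε δ z = 0) : z.1 = 0 := by
  have hr := auxRho_nonneg ht hε z
  have h1 := Real.sq_sqrt (show 0 ≤ auxRho t ε z + δ ^ 2 by positivity)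
  have h2 : Real.sqrt (auxRho t ε z + δ ^ 2) = δ := sub_eq_zero.1 h
  rw [h2] at h1
  have h3 : auxRho t ε z = 0 := by linarith
  unfold auxRho at h3
  have h4 : 0 ≤ t * (z.2 ^ 2 / (1 + ε * z.2 ^ 2)) := mul_nonneg ht.1.le (by positivity)
  have h5 : 0 < 1 - t := by linarith [ht.2]
  have h6 : z.1 ^ 2 = 0 := by
    by_contra hne
    have : 0 < z.1 ^ 2 := lt_of_le_of_ne (sq_nonneg _) (Ne.symm hne)
    nlinarith [mul_pos h5 this]
  exact pow_eq_zero_iff (two_ne_zero) |>.1 h6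

lemma auxF_lim {t ε : ℝ} (ht : t ∈ Ioo (0:ℝ) 1) (hε : 0 < ε) (z : ℝ × ℝ) :
    Tendsto (fun n : ℕ => auxF t ε (1 / ((n:ℝ) + 1)) z ^ 2) atTop (nhds (auxRho t ε z)) := by
  have hc : Continuous fun δ : ℝ => auxF t ε δ z ^ 2 := by unfold auxF; fun_prop
  have := (hc.tendsto 0).comp (tendsto_one_div_add_atTop_nhds_zero_nat (𝕜 := ℝ))
  simpa [Function.comp_def, auxF, Real.sq_sqrt (auxRho_nonneg ht hε z)] using this

lemma auxRho_le {t ε : ℝ} (ht : t ∈ Ioo (0:ℝ) 1) (hε : 0 < ε) (z : ℝ × ℝ) :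
    auxRho t ε z ≤ z.1 ^ 2 + 1 / ε := by
  have h1 : z.2 ^ 2 / (1 + ε * z.2 ^ 2) ≤ 1 / ε := by
    rw [div_le_div_iff₀ (by positivity) hε]; nlinarith
  have h2 : 0 ≤ z.2 ^ 2 / (1 + ε * z.2 ^ 2) := by positivity
  unfold auxRho
  nlinarith [ht.1, ht.2, sq_nonneg z.1]

lemma pow_deriv {X : Type*} [MeasurableSpace X] {μ : Measure X} {f h : X → ℝ} {q : ℝ} (hq : 1 < q)
    (hf : MemLp f (ENNReal.ofReal q) μ) (hh : MemLp h (ENNReal.ofReal q) μ) :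
    ∃ D, HasDerivAt (fun s : ℝ => ∫ x, |f x + s * h x| ^ q ∂μ) D 0 := by
  have hq0 : 0 < q := by linarith
  have hqt : (ENNReal.ofReal q).toReal = q := ENNReal.toReal_ofReal hq0.le
  have hne : ENNReal.ofReal q ≠ 0 := by simpa using hq0
  have hm : ∀ s : ℝ, AEStronglyMeasurable (fun x => f x + s * h x) μ := fun s =>
    hf.1.add (hh.1.const_mul s)
  have habs : Integrable (fun x => (|f x| + |h x|) ^ q) μ := by
    have := ((hf.norm.add hh.norm).integrable_norm_rpow hne ENNReal.ofReal_ne_top)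
    rw [hqt] at this
    refine this.congr (Eventually.of_forall fun x => ?_)
    simp only [Pi.add_apply, Real.norm_eq_abs]
    rw [abs_of_nonneg (by positivity)]
  have hmeas : ∀ s : ℝ, AEStronglyMeasurable (fun x => |f x + s * h x| ^ q) μ := fun s =>
    (Real.continuous_rpow_const hq0.le).comp_aestronglyMeasurable (continuous_abs.comp_aestronglyMeasurable (hm s))
  refine ⟨_, (hasDerivAt_integral_of_dominated_loc_of_deriv_le (μ := μ) (x₀ := (0:ℝ))
    (F := fun s x => |f x + s * h x| ^ q)
    (F' := fun s x => (q * |f x + s * h x| ^ (q - 2) * (f x + s * h x)) * h x)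
    (s := Metric.ball 0 1) (bound := fun x => q * (|f x| + |h x|) ^ q)
    (Metric.ball_mem_nhds _ one_pos) (Eventually.of_forall hmeas) ?_ ?_ ?_ (habs.const_mul q) ?_).2⟩
  · refine habs.mono' (hmeas 0) (Eventually.of_forall fun x => ?_)
    rw [Real.norm_of_nonneg (by positivity)]
    gcongr
    simp
  · have h1 : AEMeasurable (fun x => |f x + 0 * h x| ^ (q - 2)) μ :=
      (continuous_abs.comp_aestronglyMeasurable (hm 0)).aemeasurable.pow_const _
    exact ((h1.aestronglyMeasurable.const_mul q).mul (hm 0)).mul hh.1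
  · refine Eventually.of_forall fun x s hs => ?_
    have hs1 : |s| ≤ 1 := by
      have := hs; rw [Metric.mem_ball, dist_zero_right, Real.norm_eq_abs] at this; exact this.le
    set y := f x + s * h x with hy
    have hyb : |y| ≤ |f x| + |h x| := by
      refine (abs_add_le _ _).trans ?_
      rw [abs_mul]
      nlinarith [abs_nonneg (h x)]
    have e1 : |y| ^ (q - 2) * |y| = |y| ^ (q - 1) := by
      rcases eq_or_ne y 0 with h | h
      · rw [h, abs_zero, mul_zero, Real.zero_rpow (by linarith)]
      · rw [← Real.rpow_add_one (abs_pos.2 h).ne']; congr 1; ring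
    have e2 : (|f x| + |h x|) ^ (q - 1) * (|f x| + |h x|) = (|f x| + |h x|) ^ q := by
      rcases eq_or_ne (|f x| + |h x|) 0 with h | h
      · rw [h, mul_zero, Real.zero_rpow (by linarith)]
      · rw [← Real.rpow_add_one h]; congr 1; ring
    rw [norm_mul, norm_mul, norm_mul, Real.norm_of_nonneg hq0.le, Real.norm_of_nonneg (by positivity),
      Real.norm_eq_abs, Real.norm_eq_abs, mul_assoc q, e1, ← e2, mul_assoc]
    gcongr
    linarith [abs_nonneg (f x)]
  · refine Eventually.of_forall fun x s _ => ?_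
    have h1 : HasDerivAt (fun s : ℝ => f x + s * h x) (h x) s := by
      simpa using ((hasDerivAt_id s).mul_const (h x)).const_add (f x)
    exact (hasDerivAt_abs_rpow (f x + s * h x) hq).comp s h1


lemma calc_aux {N : ℝ → ℝ} {D L1 A1 : ℝ} (hN : HasDerivAt N D 0)
    (hL : ∀ s, N 0 + s * L1 ≤ N s) (hA : ∀ t ∈ Ioo (0:ℝ) 1, N 0 + t * A1 ≤ N t) : A1 ≤ L1 := by
  have h1 : HasDerivAt (fun s => N s - s * L1) (D - 1 * L1) 0 :=
    hN.sub ((hasDerivAt_id (0:ℝ)).mul_const L1)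
  have h2 : IsLocalMin (fun s => N s - s * L1) 0 :=
    Eventually.of_forall fun s => by have := hL s; simp only [zero_mul, sub_zero]; linarith
  have h3 := h2.hasDerivAt_eq_zero h1
  have h4 : Tendsto (slope N 0) (nhdsWithin 0 (Ioi 0)) (nhds D) :=
    (hasDerivWithinAt_iff_tendsto_slope' (by simp)).1 (hN.hasDerivWithinAt (s := Ioi 0))
  have h5 : A1 ≤ D := by
    refine ge_of_tendsto h4 ?_
    filter_upwards [Ioo_mem_nhdsGT (show (0:ℝ) < 1 by norm_num)] with t ht
    rw [slope_def_field, sub_zero, le_div_iff₀ ht.1]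
    linarith [hA t ht]
  linarith

lemma sq_memLp {X : Type*} [MeasurableSpace X] {μ : Measure X} {u : X → ℝ} {q : ℝ} (hq : 1 < q)
    (hu : MemLp u (ENNReal.ofReal (2 * q)) μ) : MemLp (fun x => u x ^ 2) (ENNReal.ofReal q) μ := by
  have hq0 : 0 < q := by linarith
  have hm : AEStronglyMeasurable (fun x => u x ^ 2) μ := hu.1.pow 2
  rw [← integrable_norm_rpow_iff hm (by simpa using hq0) ENNReal.ofReal_ne_top,
    ENNReal.toReal_ofReal hq0.le]
  have := hu.integrable_norm_rpow (by simpa using hq0) ENNReal.ofReal_ne_top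
  rw [ENNReal.toReal_ofReal (by linarith)] at this
  refine this.congr (Eventually.of_forall fun x => ?_)
  simp only
  rw [norm_pow, Real.rpow_mul (norm_nonneg _), Real.rpow_ofNat]

lemma sp_holder {p q M : ℝ} (hM : 0 < M) (hpq : p.HolderConjugate q) {V k : ℝ × ℝ → ℝ} (hV : MemSp p M V)
    (hk : MemLp k (ENNReal.ofReal q) (volume.restrict Omega)) :
    Integrable (fun x => V x * k x) (volume.restrict Omega) ∧
      ∫ x in Omega, V x * k x ≤ M * (∫ x in Omega, |k x| ^ q) ^ (1 / q) := by
  obtain ⟨h1, h2, h3⟩ := hV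
  have hp0 : 0 < p := hpq.pos
  have i1 : Integrable (fun x => V x * k x) (volume.restrict Omega) := by
    haveI := hpq.ennrealOfReal
    exact h1.integrable_mul hk
  refine ⟨i1, ?_⟩
  have e := h1.eLpNorm_eq_integral_rpow_norm (by simpa using hp0) ENNReal.ofReal_ne_top
  rw [e, ENNReal.toReal_ofReal hp0.le, ENNReal.ofReal_le_ofReal_iff hM.le] at h3
  calc ∫ x in Omega, V x * k x ≤ ∫ x in Omega, ‖V x‖ * ‖k x‖ := by
        refine integral_mono i1 (by simpa only [norm_mul] using i1.norm) fun x => ?_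
        show V x * k x ≤ ‖V x‖ * ‖k x‖
        rw [← norm_mul]; exact Real.le_norm_self _
    _ ≤ _ := integral_mul_norm_le_Lp_mul_Lq hpq h1 hk
    _ ≤ M * (∫ x in Omega, |k x| ^ q) ^ (1 / q) := by
        rw [one_div p]
        refine mul_le_mul_of_nonneg_right h3 ?_
        exact Real.rpow_nonneg (integral_nonneg fun x => by positivity) _

lemma a1_int {α₁ α₂ : ℝ} {u gx gy : ℝ × ℝ → ℝ} (h : MemH1 α₁ α₂ u gx gy) :
    Integrable (fun p => (p.2 ^ α₁ * gx p) * (p.2 ^ α₁ * gx p) +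
    (p.1 ^ α₂ * gy p) * (p.1 ^ α₂ * gy p)) (volume.restrict Omega) :=
  (h.wgx.integrable_mul h.wgx).add (h.wgy.integrable_mul h.wgy)

lemma sq_int_pos {u : ℝ × ℝ → ℝ} (h : MemLp u 2 (volume.restrict Omega))
    (hne : ¬ (∀ᵐ p ∂(volume.restrict Omega), u p = 0)) : 0 < ∫ p in Omega, u p ^ 2 := by
  refine lt_of_le_of_ne (integral_nonneg fun _ => sq_nonneg _) fun h0 => hne ?_
  have := (integral_eq_zero_iff_of_nonneg (fun _ => sq_nonneg _) h.integrable_sq).1 h0.symm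
  filter_upwards [this] with p hp
  exact pow_eq_zero_iff two_ne_zero |>.1 hp

lemma step1 {α₁ α₂ qe M lam : ℝ} (hα₁ : 0 < α₁) (hα₂ : 0 < α₂) (hq : 1 < qe) (hM : 0 < M)
    {u gx gy : ℝ × ℝ → ℝ} (hU : MemU α₁ α₂ qe u gx gy)
    (hmin : ∀ w wx wy : ℝ × ℝ → ℝ, MemU α₁ α₂ qe w wx wy → lam ≤ Jfun α₁ α₂ M qe w wx wy)
    {v hx hy : ℝ × ℝ → ℝ} (hv : MemH10 α₁ α₂ v hx hy) {t ε : ℝ} (ht : t ∈ Ioo (0:ℝ) 1) (hε : 0 < ε) :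
    lam * (∫ p in Omega, auxRho t ε (u p, v p)) ≤
      (1 - t) * a1Form α₁ α₂ u gx gy u gx gy + t * a1Form α₁ α₂ v hx hy v hx hy +
      M * (∫ p in Omega, |auxRho t ε (u p, v p)| ^ qe) ^ (1 / qe) := by
  have hq0 : 0 < qe := by linarith
  have mu := hU.1.1.memL2
  have mv := hv.1.memL2
  have hrm : AEStronglyMeasurable (fun p => auxRho t ε (u p, v p)) (volume.restrict Omega) :=
    (auxRho_contDiff hε).continuous.comp_aestronglyMeasurable (mu.1.prodMk mv.1)
  have hrint : Integrable (fun p => auxRho t ε (u p, v p)) (volume.restrict Omega) := by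
    refine (mu.integrable_sq.add (integrable_const (1 / ε))).mono' hrm (Eventually.of_forall fun p => ?_)
    rw [Real.norm_of_nonneg (auxRho_nonneg ht hε _)]
    exact auxRho_le ht hε _
  have hrq : MemLp (fun p => auxRho t ε (u p, v p)) (ENNReal.ofReal qe) (volume.restrict Omega) := by
    refine ((sq_memLp hq hU.2.1).add (memLp_const (1 / ε))).mono' hrm (Eventually.of_forall fun p => ?_)
    rw [Real.norm_of_nonneg (auxRho_nonneg ht hε _)]
    exact auxRho_le ht hε _
  have hrqi : Integrable (fun p => |auxRho t ε (u p, v p)| ^ qe) (volume.restrict Omega) := by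
    have := hrq.integrable_norm_rpow (by simpa using hq0) ENNReal.ofReal_ne_top
    rwa [ENNReal.toReal_ofReal hq0.le] at this
  have hdelta : ∀ δ : ℝ, 0 < δ → lam * (∫ p in Omega, auxF t ε δ (u p, v p) ^ 2) ≤
      (1 - t) * a1Form α₁ α₂ u gx gy u gx gy + t * a1Form α₁ α₂ v hx hy v hx hy +
      M * (∫ p in Omega, |auxRho t ε (u p, v p)| ^ qe) ^ (1 / qe) := by
    intro δ hδ
    have hF := auxF_contDiff ht hε hδ
    have hw := chain_H10 hα₁ hα₂ hU.1 hv hF (auxF_zero hδ) (auxF_bx ht hε hδ) (auxF_by ht hε hδ)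
    have hwm := hw.1.memL2.1
    have hpow : ∀ p, |auxF t ε δ (u p, v p)| ^ (2 * qe) ≤ |auxRho t ε (u p, v p)| ^ qe := by
      intro p
      rw [Real.rpow_mul (abs_nonneg _), Real.rpow_ofNat, sq_abs,
        abs_of_nonneg (auxRho_nonneg ht hε _)]
      exact Real.rpow_le_rpow (sq_nonneg _) (auxF_sq_le ht hε hδ _) hq0.le
    have hwq : MemLp (fun p => auxF t ε δ (u p, v p)) (ENNReal.ofReal (2 * qe)) (volume.restrict Omega) := by
      rw [← integrable_norm_rpow_iff hwm (by simpa using hq0) ENNReal.ofReal_ne_top,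
        ENNReal.toReal_ofReal (by linarith)]
      refine hrqi.mono' ?_ (Eventually.of_forall fun p => ?_)
      · exact (Real.continuous_rpow_const (by linarith)).comp_aestronglyMeasurable hwm.norm
      · rw [Real.norm_of_nonneg (by positivity)]; exact hpow p
    have hne : ¬ (∀ᵐ p ∂(volume.restrict Omega), auxF t ε δ (u p, v p) = 0) := by
      intro h
      apply hU.2.2
      filter_upwards [h] with p hp
      exact auxF_eq_zero ht hε hδ _ hp
    have hJ := hmin _ _ _ ⟨hw, hwq, hne⟩
    rw [Jfun, le_div_iff₀ (sq_int_pos hw.1.memL2 hne)] at hJ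
    refine hJ.trans (add_le_add ?_ ?_)
    · unfold a1Form
      rw [← integral_const_mul, ← integral_const_mul,
        ← integral_add ((a1_int hU.1.1).const_mul _) ((a1_int hv.1).const_mul _)]
      refine integral_mono (a1_int hw.1)
        (((a1_int hU.1.1).const_mul _).add ((a1_int hv.1).const_mul _)) fun p => ?_
      have g1 := auxF_grad ht hε hδ (u p, v p) (p.2 ^ α₁ * gx p) (p.2 ^ α₁ * hx p)
      have g2 := auxF_grad ht hε hδ (u p, v p) (p.1 ^ α₂ * gy p) (p.1 ^ α₂ * hy p)
      simp only
      linarith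
    · refine mul_le_mul_of_nonneg_left (Real.rpow_le_rpow (integral_nonneg fun p => by positivity) ?_
        (by positivity)) hM.le
      exact integral_mono_of_nonneg (Eventually.of_forall fun p => by positivity) hrqi
        (Eventually.of_forall hpow)
  have hlim : Tendsto (fun n : ℕ => ∫ p in Omega, auxF t ε (1 / ((n:ℝ) + 1)) (u p, v p) ^ 2) atTop
      (nhds (∫ p in Omega, auxRho t ε (u p, v p))) := by
    refine tendsto_integral_of_dominated_convergence (fun p => auxRho t ε (u p, v p)) (fun n => ?_) hrint
      (fun n => Eventually.of_forall fun p => ?_) (Eventually.of_forall fun p => auxF_lim ht hε _)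
    · exact ((auxF_contDiff ht hε (by positivity)).continuous.comp_aestronglyMeasurable
        (mu.1.prodMk mv.1)).pow 2
    · rw [Real.norm_of_nonneg (sq_nonneg _)]
      exact auxF_sq_le ht hε (by positivity) _
  exact le_of_tendsto' (hlim.const_mul lam) fun n => hdelta _ (by positivity)


lemma aForm_split {α₁ α₂ : ℝ} {V v hx hy : ℝ × ℝ → ℝ} (hv : MemH0 α₁ α₂ V v hx hy) :
    aForm α₁ α₂ V v hx hy v hx hy = a1Form α₁ α₂ v hx hy v hx hy + ∫ p in Omega, V p * v p ^ 2 := by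
  unfold aForm a1Form
  rw [← integral_add (a1_int hv.1.1) hv.2]
  congr 1; ext p; ring

lemma step2 {α₁ α₂ ppow qe M lam : ℝ} (hα₁ : 0 < α₁) (hα₂ : 0 < α₂)
    (hpq : ppow.HolderConjugate qe) (hM : 0 < M)
    {u gx gy : ℝ × ℝ → ℝ} (hU : MemU α₁ α₂ qe u gx gy)
    (hmin : ∀ w wx wy : ℝ × ℝ → ℝ, MemU α₁ α₂ qe w wx wy → lam ≤ Jfun α₁ α₂ M qe w wx wy)
    (hlam : lam * (∫ p in Omega, u p ^ 2) = a1Form α₁ α₂ u gx gy u gx gy +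
      M * (∫ p in Omega, |u p ^ 2| ^ qe) ^ (1 / qe))
    {V : ℝ × ℝ → ℝ} (hV : MemSp ppow M V)
    (hVu : a1Form α₁ α₂ u gx gy u gx gy + ∫ p in Omega, V p * u p ^ 2 = lam * ∫ p in Omega, u p ^ 2)
    {v hx hy : ℝ × ℝ → ℝ} (hv : MemH0 α₁ α₂ V v hx hy) {ε : ℝ} (hε : 0 < ε) :
    lam * (∫ p in Omega, v p ^ 2 / (1 + ε * v p ^ 2)) ≤
      a1Form α₁ α₂ v hx hy v hx hy + ∫ p in Omega, V p * v p ^ 2 := by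
  have hq : 1 < qe := hpq.symm.lt
  have hq0 : 0 < qe := by linarith
  have mu := hU.1.1.memL2
  have mv := hv.1.1.memL2
  set g : ℝ × ℝ → ℝ := fun p => v p ^ 2 / (1 + ε * v p ^ 2) with hg
  have gb : ∀ p, 0 ≤ g p ∧ g p ≤ 1 / ε ∧ g p ≤ v p ^ 2 := by
    intro p
    refine ⟨by positivity, ?_, ?_⟩
    · simp only [hg]; rw [div_le_div_iff₀ (by positivity) hε]; nlinarith
    · simp only [hg]; rw [div_le_iff₀ (by positivity)]
      nlinarith [mul_nonneg hε.le (sq_nonneg (v p)), mul_nonneg (mul_nonneg hε.le (sq_nonneg (v p))) (sq_nonneg (v p))]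
  have gm : AEStronglyMeasurable g (volume.restrict Omega) := by
    have hc : Continuous fun r : ℝ => r ^ 2 / (1 + ε * r ^ 2) :=
      Continuous.div (by fun_prop) (by fun_prop) fun r => by positivity
    exact hc.comp_aestronglyMeasurable mv.1
  have gq : MemLp g (ENNReal.ofReal qe) (volume.restrict Omega) :=
    (memLp_const (1 / ε)).mono' gm (Eventually.of_forall fun p => by
      rw [Real.norm_of_nonneg (gb p).1]; exact (gb p).2.1)
  have gi : Integrable g (volume.restrict Omega) :=
    (integrable_const (1 / ε)).mono' gm (Eventually.of_forall fun p => by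
      rw [Real.norm_of_nonneg (gb p).1]; exact (gb p).2.1)
  have uq := sq_memLp hq hU.2.1
  have ui := mu.integrable_sq
  set h : ℝ × ℝ → ℝ := fun p => g p - u p ^ 2 with hh
  have hhq : MemLp h (ENNReal.ofReal qe) (volume.restrict Omega) := gq.sub uq
  have Vu := (sp_holder hM hpq hV uq).1
  have Vg := (sp_holder hM hpq hV gq).1
  have Vh := (sp_holder hM hpq hV hhq).1
  obtain ⟨D, hD⟩ := pow_deriv hq uq hhq
  have hpos : 0 < ∫ p in Omega, |u p ^ 2| ^ qe := by
    refine lt_of_le_of_ne (integral_nonneg fun _ => by positivity) fun h0 => hU.2.2 ?_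
    have hi := uq.integrable_norm_rpow (by simpa using hq0) ENNReal.ofReal_ne_top
    rw [ENNReal.toReal_ofReal hq0.le] at hi
    have := (integral_eq_zero_iff_of_nonneg (fun _ => by positivity) hi).1 h0.symm
    filter_upwards [this] with p hp
    have hp' : |u p ^ 2| ^ qe = 0 := hp
    have := (Real.rpow_eq_zero (abs_nonneg _) hq0.ne').1 hp'
    simpa using this
  have hN : HasDerivAt (fun s : ℝ => M * (∫ p in Omega, |u p ^ 2 + s * h p| ^ qe) ^ (1 / qe)) _ 0 :=
    (hD.rpow_const (p := 1 / qe) (Or.inl (by simpa using hpos.ne'))).const_mul M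
  have hN0 : M * (∫ p in Omega, |u p ^ 2 + 0 * h p| ^ qe) ^ (1 / qe) = ∫ p in Omega, V p * u p ^ 2 := by
    simp only [zero_mul, add_zero]; linarith
  have key := calc_aux (L1 := ∫ p in Omega, V p * h p)
    (A1 := lam * (∫ p in Omega, h p) + a1Form α₁ α₂ u gx gy u gx gy - a1Form α₁ α₂ v hx hy v hx hy) hN
    (fun s => by
      rw [hN0]
      have hk := (sp_holder hM hpq hV (uq.add (hhq.const_mul s))).2
      refine le_trans (le_of_eq ?_) hk
      rw [← integral_const_mul, ← integral_add Vu (Vh.const_mul s)]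
      congr 1; ext p; simp only [Pi.add_apply]; ring)
    (fun t ht => by
      rw [hN0]
      have hk := step1 hα₁ hα₂ hq hM hU hmin hv.1 ht hε
      have e : ∀ p, auxRho t ε (u p, v p) = u p ^ 2 + t * h p := by
        intro p; simp only [auxRho, hh, hg]; ring
      simp only [e] at hk
      have hi : Integrable h (volume.restrict Omega) := gi.sub ui
      rw [integral_add ui (hi.const_mul t), integral_const_mul] at hk
      linarith)
  have e1 : ∫ p in Omega, h p = (∫ p in Omega, g p) - ∫ p in Omega, u p ^ 2 := integral_sub gi ui
  have e2 : ∫ p in Omega, V p * h p = (∫ p in Omega, V p * g p) - ∫ p in Omega, V p * u p ^ 2 := by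
    rw [← integral_sub Vg Vu]; congr 1; ext p; simp only [hh]; ring
  have e3 : ∫ p in Omega, V p * g p ≤ ∫ p in Omega, V p * v p ^ 2 := by
    refine integral_mono_ae Vg hv.2 ?_
    filter_upwards [hV.2.1] with p hp
    exact mul_le_mul_of_nonneg_left (gb p).2.2 hp
  rw [e1, e2] at key
  nlinarith

lemma step3 {v : ℝ × ℝ → ℝ} (mv : MemLp v 2 (volume.restrict Omega)) :
    Tendsto (fun n : ℕ => ∫ p in Omega, v p ^ 2 / (1 + (1 / ((n:ℝ) + 1)) * v p ^ 2)) atTop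
      (nhds (∫ p in Omega, v p ^ 2)) := by
  refine tendsto_integral_of_dominated_convergence (fun p => v p ^ 2) (fun n => ?_) mv.integrable_sq
    (fun n => Eventually.of_forall fun p => ?_) (Eventually.of_forall fun p => ?_)
  · have hc : Continuous fun r : ℝ => r ^ 2 / (1 + (1 / ((n:ℝ) + 1)) * r ^ 2) :=
      Continuous.div (by fun_prop) (by fun_prop) fun r => by positivity
    exact hc.comp_aestronglyMeasurable mv.1
  · rw [Real.norm_of_nonneg (by positivity)]
    refine div_le_self (sq_nonneg _) ?_
    have : 0 ≤ (1 / ((n:ℝ) + 1)) * v p ^ 2 := by positivity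
    linarith
  · have h1 := ((tendsto_one_div_add_atTop_nhds_zero_nat (𝕜 := ℝ)).mul_const (v p ^ 2)).const_add 1
    have h2 := (tendsto_const_nhds (x := v p ^ 2)).div h1 (by simp)
    simpa using! h2

lemma scale_H10 {α₁ α₂ c : ℝ} (hα₁ : 0 < α₁) (hα₂ : 0 < α₂) {u gx gy : ℝ × ℝ → ℝ}
    (hu : MemH10 α₁ α₂ u gx gy) :
    MemH10 α₁ α₂ (fun p => c * u p) (fun p => c * gx p) (fun p => c * gy p) := by
  have hF : ContDiff ℝ (⊤ : ℕ∞) (fun z : ℝ × ℝ => c * z.1) := contDiff_const.mul contDiff_fst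
  have hx : ∀ z, pdx (fun z : ℝ × ℝ => c * z.1) z = c := fun z =>
    pdx_eq hF z (by simpa using (hasDerivAt_id z.1).const_mul c)
  have hy : ∀ z, pdy (fun z : ℝ × ℝ => c * z.1) z = 0 := fun z =>
    pdy_eq hF z (hasDerivAt_const z.2 (c * z.1))
  have := chain_H10 hα₁ hα₂ hu hu hF (by simp) (C := |c|) (fun z => by rw [hx])
    (fun z => by rw [hy]; simp)
  simpa only [hx, hy, zero_mul, add_zero] using this


/-- If `ũ` minimizes `J` over `U` with `λ = J(ũ)`, and `Ṽ ∈ S_p`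
satisfies `a₁(ũ,v) + ∫_Ω Ṽ ũ v = λ ∫_Ω ũ v` for all `v ∈ H₀(Ω)` (formed with `Ṽ`),
then `λ₁(Ṽ) = λ = J(ũ)`. -/
theorem lam1_of_minimizer (α₁ α₂ ppow qe M : ℝ)
    (hα₁ : α₁ ∈ Ioo (0:ℝ) (1/2)) (hα₂ : α₂ ∈ Ioo (0:ℝ) (1/2))
    (hp : 1 < ppow) (hq : qe = ppow / (ppow - 1)) (hM : 0 < M)
    (ut utx uty : ℝ × ℝ → ℝ) (hmemU : MemU α₁ α₂ qe ut utx uty)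
    (hmin : ∀ u gx gy : ℝ × ℝ → ℝ, MemU α₁ α₂ qe u gx gy →
      Jfun α₁ α₂ M qe ut utx uty ≤ Jfun α₁ α₂ M qe u gx gy)
    (Vt : ℝ × ℝ → ℝ) (hVt : MemSp ppow M Vt)
    (heq : ∀ v hx hy : ℝ × ℝ → ℝ, MemH0 α₁ α₂ Vt v hx hy →
      a1Form α₁ α₂ ut utx uty v hx hy + (∫ p in Omega, Vt p * ut p * v p) =
        Jfun α₁ α₂ M qe ut utx uty * ∫ p in Omega, ut p * v p) :
    lam1 α₁ α₂ Vt = Jfun α₁ α₂ M qe ut utx uty := by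
  have hpq : ppow.HolderConjugate qe := by
    rw [hq]; exact Real.HolderConjugate.conjExponent hp
  have hq1 : 1 < qe := hpq.symm.lt
  have a1p : 0 < α₁ := hα₁.1
  have a2p : 0 < α₂ := hα₂.1
  have mu := hmemU.1.1.memL2
  have hI := sq_int_pos mu hmemU.2.2
  set lam := Jfun α₁ α₂ M qe ut utx uty with hlamdef
  have uq := sq_memLp hq1 hmemU.2.1
  have hH0 : MemH0 α₁ α₂ Vt ut utx uty := ⟨hmemU.1, (sp_holder hM hpq hVt uq).1⟩
  have hlam : lam * (∫ p in Omega, ut p ^ 2) = a1Form α₁ α₂ ut utx uty ut utx uty +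
      M * (∫ p in Omega, |ut p ^ 2| ^ qe) ^ (1 / qe) := by
    rw [hlamdef, Jfun, div_mul_cancel₀ _ hI.ne']
    congr 3
    refine integral_congr_ae (Eventually.of_forall fun p => ?_)
    simp only
    rw [Real.rpow_mul (abs_nonneg _), Real.rpow_ofNat, abs_pow]
  have hVu : a1Form α₁ α₂ ut utx uty ut utx uty + ∫ p in Omega, Vt p * ut p ^ 2
      = lam * ∫ p in Omega, ut p ^ 2 := by
    have := heq _ _ _ hH0
    simpa only [mul_assoc, ← pow_two] using this
  refine IsLeast.csInf_eq ⟨?_, ?_⟩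
  · set I := ∫ p in Omega, ut p ^ 2 with hIdef
    set c := (Real.sqrt I)⁻¹ with hc
    have hc2 : c ^ 2 * I = 1 := by
      rw [hc, inv_pow, Real.sq_sqrt hI.le, inv_mul_cancel₀ hI.ne']
    have hVc : Integrable (fun p => Vt p * (c * ut p) ^ 2) (volume.restrict Omega) := by
      refine (Integrable.const_mul hH0.2 (c ^ 2)).congr (Eventually.of_forall fun p => ?_)
      simp only; ring
    have hs : MemH0 α₁ α₂ Vt _ _ _ := ⟨scale_H10 (c := c) a1p a2p hmemU.1, hVc⟩
    refine ⟨_, _, _, hs, ?_, ?_⟩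
    · simp only [mul_pow]
      rw [integral_const_mul]; exact hc2
    · have e : aForm α₁ α₂ Vt (fun p => c * ut p) (fun p => c * utx p) (fun p => c * uty p)
          (fun p => c * ut p) (fun p => c * utx p) (fun p => c * uty p) =
          c ^ 2 * aForm α₁ α₂ Vt ut utx uty ut utx uty := by
        unfold aForm
        rw [← integral_const_mul]
        congr 1; ext p; ring
      rw [e, aForm_split hH0, hVu]
      linear_combination (-lam) * hc2
  · rintro r ⟨v, hx, hy, hv, hv1, rfl⟩
    rw [aForm_split hv]
    have hT := (step3 hv.1.1.memL2).const_mul lam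
    rw [hv1, mul_one] at hT
    exact le_of_tendsto' hT fun n => step2 a1p a2p hpq hM hmemU hmin hlam hVt hVu hv (by positivity)
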